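/- Curve-factoring lemma (Gromov): Let (M, g) be a Riemannian manifold, let p ∈ M, let t > 0, and let γ be any 1-cycle (with Z/2 coefficients) contained in the metric ball B(p, t). Then for every ε > 0, γ is homologous in B(p, t) to a sum Σ_i γ_i of closed loops, where each γ_i has length at most 2t + ε. -/

import Mathlib

/-!
Formalization of a statement from L. Guth, "Systolic inequalities and minimal hypersurfaces"
(arXiv:0903.5299).

Since Mathlib does not have Riemannian metrics, a Riemannian metric `g` on a closed manifold
is encoded by its geodesic distance function: a (length/intrinsic) metric space structure.
Lengths of curves are computed from the distance as the total variation, which for the geodesic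
distance of a Riemannian metric agrees with the Riemannian length.  The `d`-dimensional
Riemannian volume is encoded as the `d`-dimensional Hausdorff measure (with the normalization
constant `ω_d/2^d` making it agree with the Riemannian volume on `d`-dimensional Riemannian
submanifolds).
-/

open MeasureTheory Metric Set
open scoped ENNReal

noncomputable section

/-- The length (total variation, i.e. arclength) of a path in an (extended) metric space.
For a path in a Riemannian manifold, computing it with respect to the geodesic distance
gives the Riemannian length of the path. -/
def pathLength {X : Type} [PseudoEMetricSpace X] {x y : X} (γ : Path x y) : ℝ≥0∞ :=
  eVariationOn (fun t => γ t) Set.univ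

/-- A metric is a length (intrinsic) metric: the distance between two points is the infimum
of the lengths of paths joining them.  The geodesic distance of a Riemannian metric is a
length metric. -/
def IsLengthMetric (X : Type) [PseudoEMetricSpace X] : Prop :=
  ∀ x y : X, edist x y = ⨅ γ : Path x y, pathLength γ

/-- The systole of a space: the infimum of the lengths of all non-contractible closed curves. -/
def systole (X : Type) [PseudoEMetricSpace X] : ℝ≥0∞ :=
  ⨅ (x : X) (γ : Path x x) (_ : ¬γ.Homotopic (Path.refl x)), pathLength γ

/-- The volume `ω_d = π^(d/2)/Γ(d/2+1)` of the Euclidean unit ball in dimension `d`. -/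
def unitBallVolume (d : ℕ) : ℝ≥0∞ :=
  ENNReal.ofReal (Real.pi ^ ((d : ℝ) / 2) / Real.Gamma ((d : ℝ) / 2 + 1))

/-- The `d`-dimensional Riemannian volume of a subset of a metric space: the `d`-dimensional
Hausdorff measure, normalized (à la Federer, by `ω_d/2^d`) so that it agrees with the
Riemannian volume on `d`-dimensional Riemannian manifolds and their `d`-dimensional
submanifolds. -/
def rvol (d : ℕ) {X : Type} [EMetricSpace X] [MeasurableSpace X] [BorelSpace X]
    (s : Set X) : ℝ≥0∞ :=
  (unitBallVolume d / 2 ^ d) * μH[(d : ℝ)] s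

/-- The data of singular cohomology with `ℤ/2` coefficients, together with the structure
maps used in this paper: the zero class, pullbacks along continuous maps, cup products,
the evaluation pairing of degree-one classes against loops (and hence against 1-cycles),
and Poincaré duality between degree-one classes and embedded hypersurfaces. -/
structure Z2Cohomology : Type 1 where
  /-- `H k X` : the degree-`k` cohomology of the space `X` with `ℤ/2` coefficients. -/
  H : (k : ℕ) → (X : Type) → [TopologicalSpace X] → Type
  /-- the zero cohomology class -/
  zero : ∀ {k : ℕ} {X : Type} [TopologicalSpace X], H k X
  /-- contravariant functoriality: pullback along continuous maps -/
  map : ∀ {k : ℕ} {X Y : Type} [TopologicalSpace X] [TopologicalSpace Y],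
    C(X, Y) → H k Y → H k X
  map_id : ∀ {k : ℕ} {X : Type} [TopologicalSpace X] (a : H k X),
    map (ContinuousMap.id X) a = a
  map_comp : ∀ {k : ℕ} {X Y Z : Type} [TopologicalSpace X] [TopologicalSpace Y]
    [TopologicalSpace Z] (f : C(X, Y)) (g : C(Y, Z)) (a : H k Z),
    map (g.comp f) a = map f (map g a)
  map_zero : ∀ {k : ℕ} {X Y : Type} [TopologicalSpace X] [TopologicalSpace Y] (f : C(X, Y)),
    map f (zero (k := k)) = zero
  /-- homotopy invariance of cohomology -/
  map_congr : ∀ {k : ℕ} {X Y : Type} [TopologicalSpace X] [TopologicalSpace Y]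
    (f g : C(X, Y)), f.Homotopic g → ∀ a : H k Y, map f a = map g a
  /-- the cup product -/
  cup : ∀ {k l : ℕ} {X : Type} [TopologicalSpace X], H k X → H l X → H (k + l) X
  map_cup : ∀ {k l : ℕ} {X Y : Type} [TopologicalSpace X] [TopologicalSpace Y]
    (f : C(X, Y)) (a : H k Y) (b : H l Y), map f (cup a b) = cup (map f a) (map f b)
  /-- evaluation of a degree-one cohomology class on a loop -/
  evalLoop : ∀ {X : Type} [TopologicalSpace X] {x : X}, H 1 X → Path x x → ZMod 2
  evalLoop_zero : ∀ {X : Type} [TopologicalSpace X] (x : X) (γ : Path x x),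
    evalLoop zero γ = 0
  /-- the pairing with loops is homotopy invariant -/
  evalLoop_congr : ∀ {X : Type} [TopologicalSpace X] {x : X} (α : H 1 X) (γ γ' : Path x x),
    γ.Homotopic γ' → evalLoop α γ = evalLoop α γ'
  /-- the pairing with loops is additive under concatenation of loops -/
  evalLoop_trans : ∀ {X : Type} [TopologicalSpace X] {x : X} (α : H 1 X) (γ γ' : Path x x),
    evalLoop α (γ.trans γ') = evalLoop α γ + evalLoop α γ'
  /-- naturality of the pairing with loops -/
  evalLoop_map : ∀ {X Y : Type} [TopologicalSpace X] [TopologicalSpace Y]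
    (f : C(X, Y)) {x : X} (α : H 1 Y) (γ : Path x x),
    evalLoop (map f α) γ = evalLoop α (γ.map f.continuous)
  /-- `IsPoincareDual Z α` : the embedded closed hypersurface `Z` is Poincaré dual to the
  degree-one class `α`, i.e. the mod-2 intersection number of `Z` with any 1-cycle `γ`
  equals `α(γ)`.  Two embedded hypersurfaces are `ℤ/2`-homologous iff they are Poincaré
  dual to the same class. -/
  IsPoincareDual : ∀ {X : Type} [TopologicalSpace X], Set X → H 1 X → Prop
  /-- a loop disjoint from a hypersurface Poincaré dual to `α` has zero mod-2 intersection
  number with it, hence evaluates to zero against `α` -/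
  isPoincareDual_eval : ∀ {X : Type} [TopologicalSpace X] (Z : Set X) (α : H 1 X),
    IsPoincareDual Z α → ∀ (x : X) (γ : Path x x), Set.range γ ∩ Z = ∅ → evalLoop α γ = 0

namespace Z2Cohomology

variable (T : Z2Cohomology)

/-- The iterated cup product `α₁ ∪ ⋯ ∪ αₖ` of a list of degree-one classes
(by convention the unit/zero-fold product of the empty list is not needed here;
for the empty list we return the zero class, but we only ever use nonempty lists). -/
def cupList {X : Type} [TopologicalSpace X] : (l : List (T.H 1 X)) → T.H l.length X
  | [] => T.zero
  | a :: l => T.cup (cupList l) a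

/-- A 1-cycle with `ℤ/2` coefficients: a formal sum (i.e. a finite list) of closed loops. -/
abbrev OneCycle (X : Type) [TopologicalSpace X] : Type := List (Σ x : X, Path x x)

/-- The evaluation `α(c)` of a degree-one cohomology class `α` on a 1-cycle `c`. -/
def cycleEval {X : Type} [TopologicalSpace X] (α : T.H 1 X) (c : OneCycle X) : ZMod 2 :=
  (c.map fun γ => T.evalLoop α γ.2).sum

/-- The length of a 1-cycle: the sum of the lengths of its loops. -/
def cycleLength {X : Type} [PseudoEMetricSpace X] (c : OneCycle X) : ℝ≥0∞ :=
  (c.map fun γ => pathLength γ.2).sum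

/-- The length `L(α)` of a class `α ∈ H¹(X, ℤ/2)`: the smallest length of a
1-cycle `γ` with `α(γ) ≠ 0`. -/
def classLength {X : Type} [PseudoEMetricSpace X] (α : T.H 1 X) : ℝ≥0∞ :=
  ⨅ (c : OneCycle X) (_ : T.cycleEval α c ≠ 0), cycleLength c

end Z2Cohomology

/-- An embedded closed hypersurface in an `n`-dimensional manifold: a closed subset which,
with its subspace topology, is a topological `(n-1)`-manifold. -/
def IsEmbeddedHypersurface {M : Type} [TopologicalSpace M] (n : ℕ) (Z : Set M) : Prop :=
  IsClosed Z ∧ Nonempty (ChartedSpace (EuclideanSpace ℝ (Fin (n - 1))) Z)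

/-!
Fix a path `δ x` of length at most `t` from `p` to each point `x` of the ball.  Cut a loop into arcs
so small that each one is homotopic, inside the ball, to a path `τ` of length at most `ε` with the
same endpoints `x`, `y`.  The loops `δ x · τ · (δ y)⁻¹` have length at most `2t + ε`, and their
product is homotopic to the original loop conjugated by a path to `p`, since consecutive factors
`(δ y)⁻¹ · δ y` cancel.  Conjugation is invisible to homology.
-/

open Topology

local notation "I" => unitInterval

section Topology

variable {X : Type*} [TopologicalSpace X]

/-- A path of `X` with values in `S`, as a path of the subspace `S`. -/
def restrictPath {S : Set X} {x y : S} (γ : Path (x : X) y) (hγ : range γ ⊆ S) : Path x y where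
  toFun s := ⟨γ s, hγ (mem_range_self s)⟩
  source' := Subtype.ext γ.source
  target' := Subtype.ext γ.target

theorem homotopic_of_range_subset {U : Set X} [SimplyConnectedSpace U] {x y : X} {σ τ : Path x y}
    (hσ : range σ ⊆ U) (hτ : range τ ⊆ U) : σ.Homotopic τ :=
  let x' : U := ⟨x, hσ σ.source_mem_range⟩
  let y' : U := ⟨y, hσ σ.target_mem_range⟩
  (SimplyConnectedSpace.paths_homotopic (restrictPath (x := x') (y := y') σ hσ)
    (restrictPath τ hτ)).map ⟨Subtype.val, continuous_subtype_val⟩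

/-- Every point has a neighborhood `U` such that paths in `U` with the same endpoints are
homotopic in `X`; equivalently, every loop in `U`, at any base point, is null-homotopic in `X`. -/
def SemilocallySimplyConnected (X : Type*) [TopologicalSpace X] : Prop :=
  ∀ z : X, ∃ U ∈ 𝓝 z, ∀ ⦃x y : X⦄ (σ τ : Path x y), range σ ⊆ U → range τ ⊆ U → σ.Homotopic τ

theorem semilocallySimplyConnected_of_stronglyLocallyContractibleSpace
    [StronglyLocallyContractibleSpace X] : SemilocallySimplyConnected X := fun z => by
  obtain ⟨U, hUz, hU⟩ := (contractible_basis z).ex_mem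
  exact ⟨U, hUz, fun _ _ _ _ => homotopic_of_range_subset⟩

theorem stronglyLocallyContractibleSpace_of_normedSpace (E : Type*) [NormedAddCommGroup E]
    [NormedSpace ℝ E] : StronglyLocallyContractibleSpace E :=
  .of_bases (fun _ => nhds_basis_ball) fun _ _ => contractibleSpace_ball

theorem stronglyLocallyContractibleSpace_of_chartedSpace (H X : Type*) [TopologicalSpace H]
    [StronglyLocallyContractibleSpace H] [TopologicalSpace X] [ChartedSpace H X] :
    StronglyLocallyContractibleSpace X where
  contractible_basis x := by
    rw [Filter.hasBasis_self]
    intro t ht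
    have hval := (chartAt H x).open_source.isOpenEmbedding_subtypeVal
    have := (chartAt H x).isOpenEmbedding_restrict.stronglyLocallyContractibleSpace
    obtain ⟨s, ⟨hs, hs_contractible⟩, hst⟩ :=
      (contractible_basis (⟨x, mem_chart_source H x⟩ : (chartAt H x).source)).mem_iff.mp
        (continuous_subtype_val.continuousAt.preimage_mem_nhds ht)
    exact ⟨Subtype.val '' s, hval.isOpenMap.image_mem_nhds hs,
      (hval.homeomorphImage s).contractibleSpace_iff.mp hs_contractible, image_subset_iff.mpr hst⟩

theorem semilocallySimplyConnected_of_isOpen (E : Type*) [NormedAddCommGroup E] [NormedSpace ℝ E]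
    [ChartedSpace E X] {S : Set X} (hS : IsOpen S) : SemilocallySimplyConnected S :=
  have := stronglyLocallyContractibleSpace_of_normedSpace E
  have := stronglyLocallyContractibleSpace_of_chartedSpace E X
  have := hS.stronglyLocallyContractibleSpace
  semilocallySimplyConnected_of_stronglyLocallyContractibleSpace

theorem path_induction_of_local {P : ∀ ⦃x y : X⦄, Path x y → Prop}
    (congr : ∀ ⦃x y : X⦄ ⦃σ τ : Path x y⦄, σ.Homotopic τ → P σ → P τ)
    (trans : ∀ ⦃x y z : X⦄ ⦃σ : Path x y⦄ ⦃τ : Path y z⦄, P σ → P τ → P (σ.trans τ))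
    (small : ∀ z : X, ∃ U ∈ 𝓝 z, ∀ ⦃x y : X⦄ (σ : Path x y), range σ ⊆ U → P σ)
    {x y : X} (σ : Path x y) : P σ := by
  choose U hU hPU using small
  obtain ⟨u, hu_zero, hu_mono, ⟨N, hN⟩, hu⟩ :=
    exists_monotone_Icc_subset_open_cover_unitInterval (c := fun z => σ ⁻¹' interior (U z))
      (fun z => isOpen_interior.preimage σ.continuous)
      (fun s _ => mem_iUnion.mpr ⟨σ s, mem_interior_iff_mem_nhds.mpr (hU (σ s))⟩)
  have initial (k : ℕ) : P (σ.subpath 0 (u k)) := by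
    induction k with
    | zero =>
      rw [hu_zero, Path.subpath_self]
      exact hPU (σ 0) _ (Path.refl_range.trans_subset <|
        singleton_subset_iff.mpr <| mem_of_mem_nhds (hU (σ 0)))
    | succ k ih =>
      obtain ⟨z, hz⟩ := hu k
      refine congr ⟨Path.Homotopy.subpathTransSubpath σ 0 (u k) (u (k + 1))⟩
        (trans ih (hPU z _ ?_))
      rw [Path.range_subpath_of_le _ _ _ (hu_mono k.le_succ)]
      exact image_subset_iff.mpr fun s hs => interior_subset (s := U z) (hz hs)
  have of_cast {x' y' : X} (hx : x' = x) (hy : y' = y) (h : P (σ.cast hx hy)) : P σ := by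
    subst hx hy
    exact h
  have whole := initial N
  rw [hN N le_rfl, Path.subpath_zero_one] at whole
  exact of_cast _ _ whole

/-- The loop at `o` obtained by closing up `σ` along a chosen family `δ` of paths from `o` to the
points of `X`. -/
def closeUp {o : X} (δ : ∀ x, Path o x) {x y : X} (σ : Path x y) : Path o o :=
  ((δ x).trans σ).trans (δ y).symm

variable {o : X} (δ : ∀ x, Path o x)

theorem closeUp_homotopic {x y : X} {σ τ : Path x y} (h : σ.Homotopic τ) :
    (closeUp δ σ).Homotopic (closeUp δ τ) :=
  ((Path.Homotopic.refl _).hcomp h).hcomp (Path.Homotopic.refl _)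

theorem closeUp_trans_homotopic {x y z : X} (σ : Path x y) (τ : Path y z) :
    (closeUp δ (σ.trans τ)).Homotopic ((closeUp δ σ).trans (closeUp δ τ)) := by
  rw [← Path.Homotopic.Quotient.eq]
  simp only [closeUp, Path.Homotopic.Quotient.mk_trans, Path.Homotopic.Quotient.mk_symm,
    Path.Homotopic.Quotient.trans_assoc]
  congr 2
  rw [← Path.Homotopic.Quotient.trans_assoc (Path.Homotopic.Quotient.symm _),
    Path.Homotopic.Quotient.symm_trans, Path.Homotopic.Quotient.refl_trans]

/-- The path, in the space of paths, from `f` to the constant path at its endpoint, through the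
paths that wait at `f s` and then follow `f`. -/
def pathToEndpoint (f : C(I, X)) : Path f (ContinuousMap.const I (f 1)) where
  toContinuousMap := ContinuousMap.curry ⟨fun q : I × I => f (max q.1 q.2), by fun_prop⟩
  source' := by
    ext r
    exact congrArg f (max_eq_right r.2.1)
  target' := by
    ext r
    exact congrArg f (max_eq_left r.2.2)

theorem pathToEndpoint_map_eval_zero (f : C(I, X)) :
    (pathToEndpoint f).map (continuous_eval_const (0 : I)) =
      (⟨f, rfl, rfl⟩ : Path (f 0) (f 1)) := by
  ext s
  exact congrArg f (max_eq_left s.2.1)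

theorem pathToEndpoint_map_eval_one (f : C(I, X)) :
    (pathToEndpoint f).map (continuous_eval_const (1 : I)) = Path.refl (f 1) := by
  ext s
  exact congrArg f (max_eq_right s.2.2)

end Topology

section Length

variable {X : Type} [PseudoEMetricSpace X]

theorem eVariationOn_extend_comp_le {α : Type*} [LinearOrder α] {x y : X} (γ : Path x y)
    {φ : α → ℝ} (hφ : Monotone φ) (s : Set α) :
    eVariationOn (γ.extend ∘ φ) s ≤ pathLength γ :=
  eVariationOn.comp_le_of_monotoneOn γ (projIcc 0 1 zero_le_one ∘ φ)
    ((monotone_projIcc _).comp hφ |>.monotoneOn s) (mapsTo_univ _ s)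

theorem pathLength_trans_le {x y z : X} (γ : Path x y) (γ' : Path y z) :
    pathLength (γ.trans γ') ≤ pathLength γ + pathLength γ' := by
  let half : I := ⟨1 / 2, by norm_num, by norm_num⟩
  have first_half : EqOn (γ.trans γ') (γ.extend ∘ fun s : I => 2 * (s : ℝ)) (Iic half) :=
    fun s hs => if_pos hs
  have second_half : EqOn (γ.trans γ') (γ'.extend ∘ fun s : I => 2 * (s : ℝ) - 1) (Ici half) := by
    intro s hs
    rcases eq_or_lt_of_le (mem_Ici.mp hs) with rfl | hlt
    · simp [half, Path.trans_apply]
    · exact if_neg (not_le.mpr hlt)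
  have first_mono : Monotone fun s : I => 2 * (s : ℝ) :=
    (Subtype.mono_coe _).const_mul zero_le_two
  have second_mono : Monotone fun s : I => 2 * (s : ℝ) - 1 :=
    fun _ _ hab => sub_le_sub_right (first_mono hab) 1
  calc pathLength (γ.trans γ')
      = eVariationOn (γ.trans γ') (Iic half ∪ Ici half) := by rw [Iic_union_Ici]; rfl
    _ = eVariationOn (γ.trans γ') (Iic half) + eVariationOn (γ.trans γ') (Ici half) :=
        eVariationOn.union _ isGreatest_Iic isLeast_Ici
    _ ≤ pathLength γ + pathLength γ' := by
        rw [eVariationOn.eq_of_eqOn first_half, eVariationOn.eq_of_eqOn second_half]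
        gcongr
        · exact eVariationOn_extend_comp_le γ first_mono _
        · exact eVariationOn_extend_comp_le γ' second_mono _

theorem pathLength_symm {x y : X} (γ : Path x y) : pathLength γ.symm = pathLength γ := by
  refine (eVariationOn.comp_eq_of_antitoneOn γ unitInterval.symm
    (fun _ _ _ _ hab => unitInterval.symm_le_symm.mpr hab)).trans ?_
  rw [image_univ_of_surjective unitInterval.symm_bijective.surjective]
  rfl

theorem edist_source_le_pathLength {x y : X} (γ : Path x y) (s : I) :
    edist (γ s) x ≤ pathLength γ := by
  simpa only [pathLength, γ.source] using eVariationOn.edist_le γ (mem_univ s) (mem_univ 0)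

theorem pathLength_closeUp_le {o : X} {δ : ∀ x, Path o x} {L : ℝ≥0∞}
    (hδ : ∀ x, pathLength (δ x) ≤ L) {x y : X} (σ : Path x y) :
    pathLength (closeUp δ σ) ≤ 2 * L + pathLength σ :=
  calc pathLength (closeUp δ σ)
      ≤ pathLength (δ x) + pathLength σ + pathLength (δ y) := by
        grw [closeUp, pathLength_trans_le, pathLength_trans_le, pathLength_symm]
    _ ≤ L + pathLength σ + L := by gcongr <;> exact hδ _
    _ = 2 * L + pathLength σ := by ring

end Length

namespace IsLengthMetric

variable {M : Type} [PseudoEMetricSpace M] {S : Set M}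

theorem exists_path_pathLength_lt (hM : IsLengthMetric M) {x y : S} {r : ℝ≥0∞}
    (hxy : edist x y < r) (hS : eball (x : M) r ⊆ S) :
    ∃ γ : Path x y, pathLength γ < r := by
  obtain ⟨γ, hγ⟩ := iInf_lt_iff.mp ((hM x y).symm.trans_lt hxy)
  have hγS : range γ ⊆ S :=
    range_subset_iff.mpr fun s => hS ((edist_source_le_pathLength γ s).trans_lt hγ)
  exact ⟨restrictPath γ hγS, hγ⟩

theorem exists_nhds_forall_exists_short_path (hM : IsLengthMetric M) (hS : IsOpen S) {z : S}
    {U : Set S} (hU : U ∈ 𝓝 z) {ε : ℝ≥0∞} (hε : 0 < ε) :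
    ∃ V ∈ 𝓝 z, ∀ x ∈ V, ∀ y ∈ V, ∃ τ : Path x y, range τ ⊆ U ∧ pathLength τ ≤ ε := by
  obtain ⟨rU, hrU, hrU_subset⟩ := EMetric.mem_nhds_iff.mp hU
  obtain ⟨rS, hrS, hrS_subset⟩ := EMetric.mem_nhds_iff.mp (hS.mem_nhds z.2)
  let r := min (min rU rS) ε
  have hr : 0 < r := lt_min (lt_min hrU hrS) hε
  have hrU_le : r ≤ rU := (min_le_left _ _).trans (min_le_left _ _)
  have hrS_le : r ≤ rS := (min_le_left _ _).trans (min_le_right _ _)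
  have two_thirds_le : r / 3 + r / 3 ≤ r := le_self_add.trans_eq (ENNReal.add_thirds r)
  refine ⟨eball z (r / 3), eball_mem_nhds z (ENNReal.div_pos hr.ne' ENNReal.ofNat_ne_top),
    fun x hx y hy => ?_⟩
  have near_z {w : M} (hw : edist w x < r / 3 + r / 3) : edist w z < r :=
    calc edist w z ≤ edist w x + edist (x : M) z := edist_triangle _ _ _
      _ < r / 3 + r / 3 + r / 3 := ENNReal.add_lt_add hw hx
      _ = r := ENNReal.add_thirds r
  have hxy : edist x y < r / 3 + r / 3 :=
    (edist_triangle_right x y z).trans_lt (ENNReal.add_lt_add hx hy)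
  have ball_subset : eball (x : M) (r / 3 + r / 3) ⊆ S :=
    fun _ hw => hrS_subset ((near_z hw).trans_le hrS_le)
  obtain ⟨τ, hτ⟩ := hM.exists_path_pathLength_lt hxy ball_subset
  refine ⟨τ, range_subset_iff.mpr fun s => hrU_subset ?_,
    (hτ.le.trans two_thirds_le).trans (min_le_right _ _)⟩
  exact (near_z ((edist_source_le_pathLength τ s).trans_lt hτ)).trans_le hrU_le

theorem exists_nhds_forall_homotopic_short (hM : IsLengthMetric M) (hS : IsOpen S)
    (hloc : SemilocallySimplyConnected S) (z : S) {ε : ℝ≥0∞} (hε : 0 < ε) :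
    ∃ V ∈ 𝓝 z, ∀ ⦃x y : S⦄ (σ : Path x y), range σ ⊆ V →
      ∃ τ : Path x y, τ.Homotopic σ ∧ pathLength τ ≤ ε := by
  obtain ⟨U, hU, hU_homotopic⟩ := hloc z
  obtain ⟨V, hV, hV_short⟩ := hM.exists_nhds_forall_exists_short_path hS hU hε
  refine ⟨U ∩ V, Filter.inter_mem hU hV, fun x y σ hσ => ?_⟩
  obtain ⟨hσU, hσV⟩ := subset_inter_iff.mp hσ
  obtain ⟨τ, hτU, hτ⟩ := hV_short x (hσV σ.source_mem_range) y (hσV σ.target_mem_range)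
  exact ⟨τ, hU_homotopic τ σ hτU hσU, hτ⟩

end IsLengthMetric

namespace Z2Cohomology

section Evaluation

variable {T : Z2Cohomology} {X : Type} [TopologicalSpace X]

theorem evalLoop_map_eval_zero_eq_map_eval_one (α : T.H 1 X) {f : C(I, X)} (G : Path f f) :
    T.evalLoop α (G.map (continuous_eval_const (0 : I))) =
      T.evalLoop α (G.map (continuous_eval_const (1 : I))) := by
  let eval (s : I) : C(C(I, X), X) := ⟨fun g => g s, continuous_eval_const s⟩
  have eval_homotopic : (eval 0).Homotopic (eval 1) :=
    ⟨⟨⟨fun q => q.2 q.1, by fun_prop⟩, fun _ => rfl, fun _ => rfl⟩⟩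
  calc T.evalLoop α (G.map (eval 0).continuous)
      = T.evalLoop (T.map (eval 0) α) G := (T.evalLoop_map _ _ _).symm
    _ = T.evalLoop (T.map (eval 1) α) G := by rw [T.map_congr _ _ eval_homotopic]
    _ = T.evalLoop α (G.map (eval 1).continuous) := T.evalLoop_map _ _ _

-- The free homotopy that shrinks `δ` to its endpoint is a loop `G` in the space of paths.
theorem evalLoop_conj (α : T.H 1 X) {x y : X} (δ : Path y x) (γ : Path x x) :
    T.evalLoop α ((δ.trans γ).trans δ.symm) = T.evalLoop α γ := by
  obtain ⟨f, rfl, rfl⟩ := δ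
  let K : Path (ContinuousMap.const I (f 1)) (ContinuousMap.const I (f 1)) :=
    γ.map ContinuousMap.continuous_const'
  let G := ((pathToEndpoint f).trans K).trans (pathToEndpoint f).symm
  have eval_zero : G.map (continuous_eval_const (0 : I)) =
      ((⟨f, rfl, rfl⟩ : Path (f 0) (f 1)).trans γ).trans
        (⟨f, rfl, rfl⟩ : Path (f 0) (f 1)).symm := by
    simp only [G, Path.map_trans, ← Path.map_symm, pathToEndpoint_map_eval_zero]
    rfl
  have eval_one : G.map (continuous_eval_const (1 : I)) =
      ((Path.refl (f 1)).trans γ).trans (Path.refl (f 1)) := by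
    simp only [G, Path.map_trans, ← Path.map_symm, pathToEndpoint_map_eval_one]
    rfl
  have constants_cancel : (((Path.refl (f 1)).trans γ).trans (Path.refl (f 1))).Homotopic γ :=
    (Path.Homotopic.trans_refl _).trans (Path.Homotopic.refl_trans _)
  have key := evalLoop_map_eval_zero_eq_map_eval_one α G
  rw [eval_zero, eval_one] at key
  exact key.trans (T.evalLoop_congr α _ _ constants_cancel)

theorem cycleEval_singleton (α : T.H 1 X) (γ : Σ x : X, Path x x) :
    T.cycleEval α [γ] = T.evalLoop α γ.2 :=
  List.sum_singleton

theorem cycleEval_append (α : T.H 1 X) (c d : OneCycle X) :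
    T.cycleEval α (c ++ d) = T.cycleEval α c + T.cycleEval α d := by
  simp only [cycleEval, List.map_append, List.sum_append]

end Evaluation

section Homologous

variable {X : Type} [TopologicalSpace X]

/-- Two 1-cycles are homologous mod 2 if no degree-one class of any `ℤ/2`-cohomology theory
separates them; this encodes homology through its pairing with cohomology. -/
def Homologous (c d : OneCycle X) : Prop :=
  ∀ (T : Z2Cohomology) (α : T.H 1 X), T.cycleEval α c = T.cycleEval α d

theorem Homologous.trans {c d e : OneCycle X} (hcd : Homologous c d) (hde : Homologous d e) :
    Homologous c e :=
  fun T α => (hcd T α).trans (hde T α)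

theorem Homologous.append {c c' d d' : OneCycle X} (hc : Homologous c c')
    (hd : Homologous d d') : Homologous (c ++ d) (c' ++ d') := fun T α => by
  rw [cycleEval_append, cycleEval_append, hc, hd]

theorem homologous_of_homotopic {x : X} {γ γ' : Path x x} (h : γ.Homotopic γ') :
    Homologous [⟨x, γ⟩] [⟨x, γ'⟩] := fun T α => by
  rw [cycleEval_singleton, cycleEval_singleton, T.evalLoop_congr α γ γ' h]

variable {o : X} (δ : ∀ x, Path o x)

theorem homologous_closeUp {x : X} (γ : Path x x) : Homologous [⟨x, γ⟩] [⟨o, closeUp δ γ⟩] :=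
  fun T α => by
    rw [cycleEval_singleton, cycleEval_singleton]
    exact (evalLoop_conj α (δ x) γ).symm

theorem homologous_closeUp_trans {x y z : X} (σ : Path x y) (τ : Path y z) :
    Homologous [⟨o, closeUp δ (σ.trans τ)⟩] ([⟨o, closeUp δ σ⟩] ++ [⟨o, closeUp δ τ⟩]) :=
  fun T α => by
    rw [cycleEval_append, cycleEval_singleton, cycleEval_singleton, cycleEval_singleton,
      ← T.evalLoop_trans, T.evalLoop_congr α _ _ (closeUp_trans_homotopic δ σ τ)]

end Homologous

/-- The cycle `c` is homologous to a sum of loops, each of length at most `L`. -/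
def FactorsIntoLoops {X : Type} [PseudoEMetricSpace X] (L : ℝ≥0∞) (c : OneCycle X) : Prop :=
  ∃ c' : OneCycle X, (∀ γ ∈ c', pathLength γ.2 ≤ L) ∧ Homologous c c'

namespace FactorsIntoLoops

variable {X : Type} [PseudoEMetricSpace X] {L : ℝ≥0∞}

theorem of_pathLength_le {x : X} {γ : Path x x} (h : pathLength γ ≤ L) :
    FactorsIntoLoops L [⟨x, γ⟩] :=
  ⟨_, List.forall_mem_singleton.mpr h, fun _ _ => rfl⟩

theorem of_homologous {c d : OneCycle X} (hcd : Homologous c d) (hd : FactorsIntoLoops L d) :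
    FactorsIntoLoops L c :=
  let ⟨d', hd', hdd'⟩ := hd
  ⟨d', hd', hcd.trans hdd'⟩

theorem append {c d : OneCycle X} (hc : FactorsIntoLoops L c) (hd : FactorsIntoLoops L d) :
    FactorsIntoLoops L (c ++ d) :=
  let ⟨c', hc', hcc'⟩ := hc
  let ⟨d', hd', hdd'⟩ := hd
  ⟨c' ++ d', List.forall_mem_append.mpr ⟨hc', hd'⟩, hcc'.append hdd'⟩

theorem of_forall_mem {c : OneCycle X} (h : ∀ γ ∈ c, FactorsIntoLoops L [γ]) :
    FactorsIntoLoops L c := by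
  induction c with
  | nil => exact ⟨[], List.forall_mem_nil _, fun _ _ => rfl⟩
  | cons γ c ih =>
    obtain ⟨hγ, hc⟩ := List.forall_mem_cons.mp h
    exact hγ.append (ih hc)

end FactorsIntoLoops

section Cone

variable {M : Type} [PseudoEMetricSpace M] {S : Set M} {o : S} {δ : ∀ x, Path o x} {L ε : ℝ≥0∞}

theorem factorsIntoLoops_closeUp (hM : IsLengthMetric M) (hS : IsOpen S)
    (hloc : SemilocallySimplyConnected S) (hδ : ∀ x, pathLength (δ x) ≤ L) (hε : 0 < ε)
    {x y : S} (σ : Path x y) : FactorsIntoLoops (2 * L + ε) [⟨o, closeUp δ σ⟩] := by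
  refine path_induction_of_local
    (P := fun _ _ σ => FactorsIntoLoops (2 * L + ε) [⟨o, closeUp δ σ⟩]) ?_ ?_ (fun z => ?_) σ
  case refine_1 =>
    exact fun x y σ τ h hσ => hσ.of_homologous
      (homologous_of_homotopic (closeUp_homotopic δ h.symm))
  case refine_2 =>
    exact fun x y z σ τ hσ hτ => (hσ.append hτ).of_homologous (homologous_closeUp_trans δ σ τ)
  case refine_3 =>
    obtain ⟨V, hV, hV_short⟩ := hM.exists_nhds_forall_homotopic_short hS hloc z hε
    refine ⟨V, hV, fun x y σ hσ => ?_⟩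
    obtain ⟨τ, hτσ, hτ⟩ := hV_short σ hσ
    have short_loop : FactorsIntoLoops (2 * L + ε) [⟨o, closeUp δ τ⟩] :=
      .of_pathLength_le ((pathLength_closeUp_le hδ τ).trans (by gcongr))
    exact short_loop.of_homologous (homologous_of_homotopic (closeUp_homotopic δ hτσ.symm))

theorem factorsIntoLoops_of_cone (hM : IsLengthMetric M) (hS : IsOpen S)
    (hloc : SemilocallySimplyConnected S) (hδ : ∀ x, pathLength (δ x) ≤ L) (hε : 0 < ε)
    (c : OneCycle S) : FactorsIntoLoops (2 * L + ε) c :=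
  .of_forall_mem fun γ _ =>
    (factorsIntoLoops_closeUp hM hS hloc hδ hε γ.2).of_homologous (homologous_closeUp δ γ.2)

end Cone

end Z2Cohomology

theorem curve_factoring_lemma_general {M : Type} [PseudoMetricSpace M] (hM : IsLengthMetric M)
    {p : M} {t : ℝ} (ht : 0 < t) (hloc : SemilocallySimplyConnected (ball p t))
    (c : Z2Cohomology.OneCycle (ball p t)) {ε : ℝ} (hε : 0 < ε) :
    ∃ c' : Z2Cohomology.OneCycle (ball p t),
      (∀ γ ∈ c', pathLength γ.2 ≤ ENNReal.ofReal (2 * t + ε)) ∧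
      ∀ (T : Z2Cohomology) (α : T.H 1 (ball p t)), T.cycleEval α c = T.cycleEval α c' := by
  let center : ball p t := ⟨p, mem_ball_self ht⟩
  have radial_path (x : ball p t) :
      ∃ γ : Path center x, pathLength γ ≤ ENNReal.ofReal t := by
    have hx : edist center x < ENNReal.ofReal t := by
      rw [edist_comm, edist_lt_ofReal]
      exact x.2
    obtain ⟨γ, hγ⟩ := hM.exists_path_pathLength_lt hx eball_ofReal.subset
    exact ⟨γ, hγ.le⟩
  choose δ hδ using radial_path
  have bound : ENNReal.ofReal (2 * t + ε) = 2 * ENNReal.ofReal t + ENNReal.ofReal ε := by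
    rw [ENNReal.ofReal_add (by positivity) hε.le, ENNReal.ofReal_mul zero_le_two,
      ENNReal.ofReal_ofNat]
  rw [bound]
  exact Z2Cohomology.factorsIntoLoops_of_cone hM isOpen_ball hloc hδ (ENNReal.ofReal_pos.mpr hε) c

/-- **Curve-factoring lemma (Gromov).**  Let `(M, g)` be a Riemannian manifold, `p ∈ M`,
`t > 0`, and let `γ` be any 1-cycle (a formal sum of closed loops, with `ℤ/2` coefficients)
contained in the metric ball `B(p, t)`.  Then for every `ε > 0`, `γ` is homologous inside
`B(p, t)` to a sum `Σᵢ γᵢ` of closed loops, each of length at most `2t + ε`.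

Being `ℤ/2`-homologous inside `B(p, t)` is expressed via the (universal-coefficient) pairing:
two 1-cycles in `B(p, t)` are `ℤ/2`-homologous iff every class in `H¹(B(p, t), ℤ/2)`
evaluates equally on them. -/
theorem curve_factoring_lemma (n : ℕ) (T : Z2Cohomology)
    (M : Type) [MetricSpace M] [ChartedSpace (EuclideanSpace ℝ (Fin n)) M]
    (hM : IsLengthMetric M) (p : M) (t : ℝ) (ht : 0 < t)
    (c : Z2Cohomology.OneCycle ↑(Metric.ball p t)) (ε : ℝ) (hε : 0 < ε) :
    ∃ c' : Z2Cohomology.OneCycle ↑(Metric.ball p t),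
      (∀ γ ∈ c', pathLength γ.2 ≤ ENNReal.ofReal (2 * t + ε)) ∧
      ∀ α : T.H 1 ↑(Metric.ball p t), T.cycleEval α c = T.cycleEval α c' := by
  obtain ⟨c', hc', hcc'⟩ := curve_factoring_lemma_general hM ht
    (semilocallySimplyConnected_of_isOpen (EuclideanSpace ℝ (Fin n)) isOpen_ball) c hε
  exact ⟨c', hc', hcc' T⟩

end
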